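/- arXiv:1502.03184 — 2 statements merged into one kernel-verified Lean document; each statement's English description precedes it below -/
import Mathlib

section
/- Let I and J be ideals of R and let e ≥ 0. Then (m^{[e]} : J) ⊆ (m^{[e]} : I) if and only if I + m^{[e]} ⊆ J + m^{[e]}. -/
/-!
Write `q = p ^ e`, `Q = m^{[e]}` and `D = (q - 1, …, q - 1)`. In characteristic `p` the ideal `Q` is
generated by the `X i ^ q`, so `f ∈ Q` exactly when every monomial of `f` has some exponent `≥ q`,
i.e. when no exponent of `f` is `≤ D` (`mem_bracketPow_mxI_iff`).
The functional `φ f = coeff D f` is a socle functional of `R / Q`: the pairing `(f, g) ↦ φ (f * g)`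
is perfect on `R / Q`. Concretely, `f ∈ Q` once `φ (f * g) = 0` for all `g`
(`mem_of_coeff_mul_eq_zero`), and every `k`-linear functional killing `Q` has the form
`f ↦ φ (g * f)` (`exists_coeff_mul_eq`).

If `x ∈ I` were not in `J + Q`, a functional killing `J + Q` but not `x` would be represented by
some `g`; then `g * J ⊆ Q`, so `g ∈ (Q : J) ⊆ (Q : I)` and `φ (g * x) = 0`, a contradiction.
The converse implication is formal.
-/

open MvPolynomial

noncomputable section

/-- `I^{[e]}`-style bracket power: the ideal generated by `q`-th powers of elements of `I`. -/
def bracketPow {A : Type*} [CommRing A] (I : Ideal A) (q : ℕ) : Ideal A :=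
  Ideal.span ((fun u => u ^ q) '' (I : Set A))

/-- The test ideal `τ(f^{1 - 1/p^e})`: the smallest ideal `a` with `f^{p^e - 1} ∈ a^{[e]}`. -/
def testIdeal {A : Type*} [CommRing A] (p : ℕ) (f : A) (e : ℕ) : Ideal A :=
  sInf {a : Ideal A | f ^ (p ^ e - 1) ∈ bracketPow a (p ^ e)}

/-- The homogeneous maximal ideal `m = (x_0, ..., x_n)`. -/
def mxI (k : Type*) [Field k] (n : ℕ) : Ideal (MvPolynomial (Fin (n + 1)) k) :=
  Ideal.span (Set.range (X : Fin (n + 1) → MvPolynomial (Fin (n + 1)) k))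

/-- The set of degrees of homogeneous elements of `(m^{[e]} : τ) \ m^{[e]}`. -/
def MeSet (k : Type*) [Field k] (n p : ℕ) (τ : Ideal (MvPolynomial (Fin (n + 1)) k))
    (e : ℕ) : Set ℕ :=
  {d : ℕ | ∃ g : MvPolynomial (Fin (n + 1)) k,
    g ∈ (bracketPow (mxI k n) (p ^ e)).colon τ ∧
    g ∉ bracketPow (mxI k n) (p ^ e) ∧ g.IsHomogeneous d}

/-- `M_e`: the minimal degree of a homogeneous element of `(m^{[e]} : τ) \ m^{[e]}`. -/
def Me (k : Type*) [Field k] (n p : ℕ) (τ : Ideal (MvPolynomial (Fin (n + 1)) k))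
    (e : ℕ) : ℕ :=
  sInf (MeSet k n p τ e)

/-- `e_0`: the least `e` with `τ ⊄ m^{[e]}`. -/
def e0 (k : Type*) [Field k] (n p : ℕ) (τ : Ideal (MvPolynomial (Fin (n + 1)) k)) : ℕ :=
  sInf {e : ℕ | ¬ τ ≤ bracketPow (mxI k n) (p ^ e)}

section SocleDuality

variable {k : Type*} [Field k] {n : ℕ}

/-- The exponent `(q - 1, …, q - 1)` of the socle monomial of `R / (X i ^ q)`. -/
def socleExp (n q : ℕ) : Fin (n + 1) →₀ ℕ :=
  Finsupp.equivFunOnFinite.symm fun _ => q - 1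

lemma le_socleExp_iff {q : ℕ} (hq : 0 < q) (s : Fin (n + 1) →₀ ℕ) :
    s ≤ socleExp n q ↔ ∀ i, s i < q := by
  rw [Finsupp.le_def]
  refine forall_congr' fun i => ?_
  simp only [socleExp, Finsupp.equivFunOnFinite_symm_apply_apply]
  omega

/-- By additivity of Frobenius, `m^{[e]}` is generated by the `p ^ e`-th powers of the variables. -/
lemma bracketPow_mxI_eq (p : ℕ) [Fact p.Prime] [CharP k p] (e : ℕ) :
    bracketPow (mxI k n) (p ^ e) =
      Ideal.span ((fun s => monomial s (1 : k)) ''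
        Set.range fun i : Fin (n + 1) => Finsupp.single i (p ^ e)) := by
  have hX : ∀ i : Fin (n + 1), monomial (Finsupp.single i (p ^ e)) (1 : k) = X i ^ p ^ e :=
    fun i => (X_pow_eq_monomial).symm
  apply le_antisymm
  · rw [bracketPow, Ideal.span_le]
    rintro _ ⟨u, hu, rfl⟩
    have : mxI k n ≤ Ideal.comap (iterateFrobenius (MvPolynomial (Fin (n + 1)) k) p e)
        (Ideal.span ((fun s => monomial s (1 : k)) ''
          Set.range fun i : Fin (n + 1) => Finsupp.single i (p ^ e))) := by
      rw [mxI, Ideal.span_le]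
      rintro _ ⟨i, rfl⟩
      refine Ideal.subset_span ⟨_, ⟨i, rfl⟩, ?_⟩
      simp only [hX, iterateFrobenius_def]
    simpa [iterateFrobenius_def] using this hu
  · rw [Ideal.span_le]
    rintro _ ⟨_, ⟨i, rfl⟩, rfl⟩
    exact Ideal.subset_span ⟨X i, Ideal.subset_span ⟨i, rfl⟩, (hX i).symm⟩

lemma mem_bracketPow_mxI_iff (p : ℕ) [Fact p.Prime] [CharP k p] (e : ℕ)
    (f : MvPolynomial (Fin (n + 1)) k) :
    f ∈ bracketPow (mxI k n) (p ^ e) ↔ ∀ s ≤ socleExp n (p ^ e), coeff s f = 0 := by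
  have hq : 0 < p ^ e := pow_pos (Fact.out : p.Prime).pos e
  rw [bracketPow_mxI_eq, mem_ideal_span_monomial_image]
  refine forall_congr' fun s => ?_
  rw [le_socleExp_iff hq, mem_support_iff]
  simp only [Set.exists_range_iff, Finsupp.single_le_iff]
  constructor
  · intro h hs
    by_contra hc
    obtain ⟨i, hi⟩ := h hc
    exact absurd (hs i) (not_lt.mpr hi)
  · intro h hc
    by_contra! hs
    exact hc (h hs)

/-- Nondegeneracy of the socle pairing on `R / m^{[e]}`. -/
lemma mem_of_coeff_mul_eq_zero (p : ℕ) [Fact p.Prime] [CharP k p] (e : ℕ)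
    (f : MvPolynomial (Fin (n + 1)) k)
    (h : ∀ g, coeff (socleExp n (p ^ e)) (f * g) = 0) :
    f ∈ bracketPow (mxI k n) (p ^ e) := by
  rw [mem_bracketPow_mxI_iff]
  intro s hs
  have := h (monomial (socleExp n (p ^ e) - s) 1)
  rwa [coeff_mul_monomial', if_pos tsub_le_self, tsub_tsub_cancel_of_le hs, mul_one] at this

/-- Every functional on `R` killing `m^{[e]}` is represented by an element through the socle
pairing. -/
lemma exists_coeff_mul_eq (p : ℕ) [Fact p.Prime] [CharP k p] (e : ℕ)
    (l : MvPolynomial (Fin (n + 1)) k →ₗ[k] k)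
    (hl : ∀ f ∈ bracketPow (mxI k n) (p ^ e), l f = 0) :
    ∃ g, ∀ f, coeff (socleExp n (p ^ e)) (g * f) = l f := by
  set D := socleExp n (p ^ e) with hD
  -- The coefficient of `g` at the exponent complementary to `s` is the value of `l` at `X ^ s`.
  refine ⟨∑ s ∈ Finset.Iic D, monomial (D - s) (l (monomial s 1)), fun f => ?_⟩
  induction f using MvPolynomial.induction_on' with
  | add a b ha hb => rw [mul_add, coeff_add, ha, hb, map_add]
  | monomial t c =>
    have hc : l (monomial t c) = l (monomial t 1) * c := by
      rw [mul_comm, ← smul_eq_mul, ← map_smul, smul_monomial, smul_eq_mul, mul_one]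
    rw [coeff_mul_monomial', hc]
    split_ifs with ht
    · congr 1
      rw [coeff_sum, Finset.sum_eq_single t]
      · rw [coeff_monomial, if_pos rfl]
      · intro s hs hst
        rw [coeff_monomial, if_neg]
        intro h
        apply hst
        rw [← tsub_tsub_cancel_of_le (Finset.mem_Iic.mp hs), h, tsub_tsub_cancel_of_le ht]
      · intro h
        exact absurd (Finset.mem_Iic.mpr ht) h
    · rw [hl, zero_mul]
      rw [mem_bracketPow_mxI_iff]
      intro s hs
      rw [coeff_monomial, if_neg]
      rintro rfl
      exact ht hs

end SocleDuality

/-- For ideals `I`, `J` of `R` and `e ≥ 0`,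
`(m^{[e]} : J) ⊆ (m^{[e]} : I)` iff `I + m^{[e]} ⊆ J + m^{[e]}`. -/
theorem colon_le_colon_iff {k : Type*} [Field k] {p n : ℕ} [Fact p.Prime] [CharP k p]
    (I J : Ideal (MvPolynomial (Fin (n + 1)) k)) (e : ℕ) :
    (bracketPow (mxI k n) (p ^ e)).colon J ≤ (bracketPow (mxI k n) (p ^ e)).colon I ↔
      I ⊔ bracketPow (mxI k n) (p ^ e) ≤ J ⊔ bracketPow (mxI k n) (p ^ e) := by
  constructor
  · intro h
    refine sup_le (fun x hx => ?_) le_sup_right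
    by_contra hxJ
    obtain ⟨l, hlx, hl⟩ := Submodule.exists_le_ker_of_notMem
      (p := (J ⊔ bracketPow (mxI k n) (p ^ e)).restrictScalars k) (v := x) hxJ
    have hl0 : ∀ f ∈ J ⊔ bracketPow (mxI k n) (p ^ e), l f = 0 := fun f hf => hl hf
    obtain ⟨g, hg⟩ := exists_coeff_mul_eq p e l fun f hf => hl0 f (Ideal.mem_sup_right hf)
    have hgJ : g ∈ (bracketPow (mxI k n) (p ^ e)).colon J := by
      rw [Submodule.mem_colon]
      intro j hj
      refine mem_of_coeff_mul_eq_zero p e _ fun r => ?_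
      rw [smul_eq_mul, mul_assoc, hg]
      exact hl0 _ (Ideal.mem_sup_left (J.mul_mem_right r hj))
    have hgx := Submodule.mem_colon.mp (h hgJ) x hx
    rw [smul_eq_mul, mem_bracketPow_mxI_iff] at hgx
    exact hlx ((hg x).symm.trans (hgx _ le_rfl))
  · intro h g hg
    rw [Submodule.mem_colon] at hg ⊢
    intro x hx
    obtain ⟨j, hj, y, hy, rfl⟩ := Submodule.mem_sup.mp (h (Ideal.mem_sup_left hx))
    rw [smul_add]
    exact add_mem (hg j hj) (Ideal.mul_mem_left _ g hy)

end
end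

section
/- (Main theorem, element form.) Let f ∈ R be homogeneous of degree d and assume √τ(f^{1−1/p}) = m and τ(f^{1−1/p}) ⊆ m, and let δ(f) denote the eventual constant value of M_e − (n+1)p^e. Then for every e ≥ e_0 and every homogeneous g ∈ R with g ∉ m^{[e]} and deg(g) − (n+1)p^e < δ(f), one has f^{p−1}·g^p ∉ m^{[e+1]}. (This expresses injectivity of the Frobenius action F on H^n_m(R/fR) in degrees < δ(f) + d via the Čech description of H^{n+1}_m(R).) -/
/-!
Suppose `f^(p-1) * g^p ∈ m^{[e+1]}`. Since `m^{[e+1]} ⊆ (m^{[e]})^{[p]}` and Frobenius is flat on the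
polynomial ring, `f^(p-1) ∈ (m^{[e]} : g)^{[p]}` (`mem_bracketPow_colon`), so `τ ⊆ (m^{[e]} : g)` by
minimality of the test ideal, i.e. `g ∈ (m^{[e]} : τ)` and `deg g` is one of the degrees over which
`M_e` is minimised. Multiplying `g` by `(x_0 ⋯ x_n)^(p^e' - p^e)` yields an element of
`(m^{[e']} : τ)` outside `m^{[e']}` (`mul_mem_bracketPow_mxI`), hence
`M_e' - (n+1) p^e' ≤ deg g - (n+1) p^e < δ` for every `e' ≥ e`. For large `e'` the left side is `δ`,
a contradiction.

Flatness is proved with explicit coordinates, over an arbitrary field `k` of characteristic `p`.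
-/

open MvPolynomial

noncomputable section

/-- A field extension `F : K → L` has a basis `b`, with `K`-linear coordinates `r`. The scalar action
is written out through `F`, so that it can be applied to the Frobenius `k → k` without putting
a second `k`-module structure on `k`. -/
theorem exists_coords.{u, v} {K : Type u} {L : Type v} [Field K] [Field L] (F : K →+* L) :
    ∃ (ι : Type v) (b : ι → L) (r : L →+ (ι →₀ K)),
      (∀ c x i, r (F c * x) i = c * r x i) ∧
      ∀ x, ((r x).sum fun i c => F c * b i) = x := by
  let _ := F.toAlgebra
  let B := Module.Basis.ofVectorSpace K L
  refine ⟨_, B, B.repr.toLinearMap.toAddMonoidHom, ?_, ?_⟩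
  · intro c x i
    have : F c * x = c • x := (Algebra.smul_def c x).symm
    simp [this]
  · intro x
    conv_rhs => rw [← B.linearCombination_repr x]
    rw [Finsupp.linearCombination_apply]
    refine Finsupp.sum_congr fun i _ => ?_
    exact (Algebra.smul_def _ _).symm

/-- The polynomial obtained from `h` by keeping the monomials with exponent congruent to `a` mod `p`,
replacing `x^(p s + a)` by `x^s`, and taking the `i`-th coordinate of each coefficient. -/
theorem exists_coordPoly {k σ ι : Type*} [Field k] {p : ℕ} (r : k →+ (ι →₀ k)) (hp : 0 < p)
    (h : MvPolynomial σ k) (i : ι) (a : σ →₀ ℕ) (ha : ∀ j, a j < p) :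
    ∃ q : MvPolynomial σ k, ∀ s, coeff s q = r (coeff (p • s + a) h) i := by
  classical
  refine ⟨∑ s ∈ h.support.image fun m => m.mapRange (· / p) (Nat.zero_div p),
    monomial s (r (coeff (p • s + a) h) i), fun s => ?_⟩
  rw [coeff_sum]
  simp only [coeff_monomial]
  rw [Finset.sum_ite_eq', ite_eq_left_iff]
  intro hs
  suffices coeff (p • s + a) h = 0 by simp [this]
  by_contra hne
  refine hs (Finset.mem_image.2 ⟨_, mem_support_iff.2 hne, ?_⟩)
  ext j
  simp [Nat.mul_add_div hp, Nat.div_eq_of_lt (ha j)]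

section
variable {k : Type*} [Field k] {p : ℕ} [Fact p.Prime] [CharP k p] {σ : Type*}

theorem bracketPow_mxI (n e : ℕ) : bracketPow (mxI k n) (p ^ e) =
    Ideal.span ((fun s => monomial s (1 : k)) '' Set.range fun i => Finsupp.single i (p ^ e)) := by
  apply le_antisymm
  · rw [bracketPow, Ideal.span_le]
    rintro _ ⟨u, hu, rfl⟩
    replace hu : u ∈ mxI k n := hu
    show u ^ p ^ e ∈ _
    rw [mxI] at hu
    induction hu using Submodule.span_induction with
    | mem x hx =>
      obtain ⟨i, rfl⟩ := hx
      apply Ideal.subset_span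
      exact ⟨_, ⟨i, rfl⟩, by simp [X_pow_eq_monomial]⟩
    | zero => rw [zero_pow (pow_ne_zero _ (Fact.out : p.Prime).ne_zero)]; exact zero_mem _
    | add x y _ _ hx hy => rw [add_pow_char_pow]; exact add_mem hx hy
    | smul a x _ hx => rw [smul_eq_mul, mul_pow]; exact Ideal.mul_mem_left _ _ hx
  · rw [Ideal.span_le]
    rintro _ ⟨_, ⟨i, rfl⟩, rfl⟩
    apply Ideal.subset_span
    exact ⟨X i, Ideal.subset_span ⟨i, rfl⟩, by simp [X_pow_eq_monomial]⟩

/-- `m^{[e]}` is the monomial ideal `(x_0^(p^e), …, x_n^(p^e))`. -/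
theorem mem_bracketPow_mxI {n e : ℕ} {h : MvPolynomial (Fin (n + 1)) k} :
    h ∈ bracketPow (mxI k n) (p ^ e) ↔ ∀ s, coeff s h ≠ 0 → ∃ i, p ^ e ≤ s i := by
  rw [bracketPow_mxI, mem_ideal_span_monomial_image]
  simp

/-- Multiplication by `(x_0 ⋯ x_n)^(p^(e+j) - p^e)` induces an injection
`R/m^{[e]} → R/m^{[e+j]}`. -/
theorem mul_mem_bracketPow_mxI {n e j : ℕ} {h : MvPolynomial (Fin (n + 1)) k} :
    h * monomial (Finsupp.equivFunOnFinite.symm fun _ => p ^ (e + j) - p ^ e) 1 ∈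
      bracketPow (mxI k n) (p ^ (e + j)) ↔ h ∈ bracketPow (mxI k n) (p ^ e) := by
  have hle : p ^ e ≤ p ^ (e + j) := Nat.pow_le_pow_right (Fact.out : p.Prime).pos (by omega)
  rw [mem_bracketPow_mxI, mem_bracketPow_mxI]
  constructor
  · intro H s hs
    obtain ⟨i, hi⟩ := H (s + Finsupp.equivFunOnFinite.symm fun _ => p ^ (e + j) - p ^ e)
      (by rw [coeff_mul_monomial]; simpa using hs)
    refine ⟨i, ?_⟩
    simp at hi
    omega
  · intro H s hs
    rw [coeff_mul_monomial'] at hs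
    split_ifs at hs with hle'
    · obtain ⟨i, hi⟩ := H _ (by simpa using hs)
      refine ⟨i, ?_⟩
      have := hle' i
      simp at hi this
      omega
    · simp at hs

/-- The coordinate maps of `exists_coordPoly` are linear over `R` acting through Frobenius. -/
theorem coord_pow_mul {ι : Type*} {r : k →+ (ι →₀ k)}
    (hr : ∀ c x i, r (frobenius k p c * x) i = c * r x i)
    {i : ι} {a : σ →₀ ℕ} (ha : ∀ j, a j < p)
    {φ : MvPolynomial σ k → MvPolynomial σ k}
    (hφ : ∀ h s, coeff s (φ h) = r (coeff (p • s + a) h) i)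
    (g h : MvPolynomial σ k) : φ (g ^ p * h) = g * φ h := by
  have hp : 0 < p := (Fact.out : p.Prime).pos
  induction g using MvPolynomial.induction_on' with
  | monomial u c =>
    ext s
    rw [hφ, monomial_pow, coeff_monomial_mul', coeff_monomial_mul']
    have key : p • u ≤ p • s + a ↔ u ≤ s := by
      simp only [Finsupp.le_def]
      refine forall_congr' fun j => ?_
      have := ha j
      simp only [Finsupp.add_apply, Finsupp.smul_apply, smul_eq_mul]
      constructor
      · intro H
        by_contra! hlt
        have := Nat.mul_le_mul_left p (Nat.succ_le_of_lt hlt)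
        rw [Nat.mul_succ] at this
        omega
      · intro H
        have := Nat.mul_le_mul_left p H
        omega
    by_cases hus : u ≤ s
    · rw [if_pos (key.2 hus), if_pos hus, hφ]
      have : p • s + a - p • u = p • (s - u) + a := by
        ext j
        have := Nat.mul_le_mul_left p (hus j)
        simp only [Finsupp.add_apply, Finsupp.smul_apply, smul_eq_mul, Finsupp.tsub_apply,
          Nat.mul_sub]
        omega
      rw [this]
      exact hr _ _ _
    · rw [if_neg (key.not.2 hus), if_neg hus]
      simp
  | add g₁ g₂ h₁ h₂ =>
    have hadd : ∀ x y, φ (x + y) = φ x + φ y := fun x y => by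
      ext s; simp [hφ]
    rw [add_pow_char, add_mul, hadd, h₁, h₂, add_mul]

theorem coeff_pow_mul_monomial [DecidableEq σ] {a s : σ →₀ ℕ} {c : k} (ha : ∀ j, a j < p) (q : MvPolynomial σ k) :
    coeff s (q ^ p * monomial a c) =
      if s.mapRange (· % p) (Nat.zero_mod p) = a then
        (coeff (s.mapRange (· / p) (Nat.zero_div p)) q) ^ p * c else 0 := by
  have hp : p ≠ 0 := (Fact.out : p.Prime).ne_zero
  rw [coeff_mul_monomial', ← map_frobenius_expand, coeff_map]
  by_cases hs : s.mapRange (· % p) (Nat.zero_mod p) = a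
  · have has : a ≤ s := by
      rw [← hs]; intro j; simpa using Nat.mod_le _ _
    rw [if_pos has, if_pos hs]
    have : s - a = p • s.mapRange (· / p) (Nat.zero_div p) := by
      rw [← hs]
      ext j
      have := Nat.div_add_mod (s j) p
      simp
      omega
    rw [this, coeff_expand_smul _ hp, frobenius_def]
  · rw [if_neg hs]
    split_ifs with has
    · have : ∃ j, ¬ p ∣ (s - a) j := by
        by_contra! H
        refine hs ?_
        ext j
        have h1 := (Nat.modEq_iff_dvd' (has j)).2 (H j)
        have h2 : a j % p = s j % p := h1
        rw [Nat.mod_eq_of_lt (ha j)] at h2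
        simp [h2]
      obtain ⟨j, hj⟩ := this
      rw [coeff_expand_of_not_dvd _ hj]
      simp
    · rfl

/-- Flatness of Frobenius on a polynomial ring, in the form `(J^{[p]} : g^p) ⊆ (J : g)^{[p]}`. The
ring is free over its `p`-th powers on the elements `b i * x^a`, where `b` is a basis of `k` over
`k^p` and all exponents of `a` are below `p`; the coordinates of an element of `J^{[p]}` lie in `J`,
and those of `h * g^p` are the coordinates of `h` times `g`. -/
theorem mem_bracketPow_colon (J : Ideal (MvPolynomial σ k)) (g h : MvPolynomial σ k)
    (hgh : h * g ^ p ∈ bracketPow J p) : h ∈ bracketPow (J.colon {g}) p := by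
  classical
  have hp : 0 < p := (Fact.out : p.Prime).pos
  obtain ⟨ι, b, r, hr, hb⟩ := exists_coords (frobenius k p)
  have hφ : ∀ (i : ι) (a : {a : σ →₀ ℕ // ∀ j, a j < p}) (h : MvPolynomial σ k),
      ∃ q : MvPolynomial σ k, ∀ s, coeff s q = r (coeff (p • s + a.1) h) i :=
    fun i a h => exists_coordPoly r hp h i a.1 a.2
  choose φ hφ using hφ
  have hmul : ∀ i a g h, φ i a (g ^ p * h) = g * φ i a h := fun i a g h =>
    coord_pow_mul hr a.2 (hφ i a) g h
  have hJ : ∀ i a, ∀ x ∈ bracketPow J p, ∀ c, φ i a (c * x) ∈ J := by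
    intro i a x hx
    rw [bracketPow] at hx
    induction hx using Submodule.span_induction with
    | mem x hx =>
      obtain ⟨u, hu, rfl⟩ := hx
      intro c
      rw [mul_comm, hmul]
      exact Ideal.mul_mem_right _ _ hu
    | zero =>
      intro c
      have : φ i a (c * 0) = 0 := by ext s; simp [hφ]
      rw [this]; exact zero_mem _
    | add x y _ _ hx hy =>
      intro c
      have : φ i a (c * (x + y)) = φ i a (c * x) + φ i a (c * y) := by
        ext s; simp [hφ, mul_add]
      rw [this]; exact add_mem (hx c) (hy c)
    | smul d x _ hx =>
      intro c
      rw [smul_eq_mul, ← mul_assoc]; exact hx _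
  have hcol : ∀ i a, φ i a h ∈ J.colon {g} := by
    intro i a
    rw [Submodule.mem_colon_singleton, smul_eq_mul, mul_comm, ← hmul, mul_comm]
    simpa using hJ i a _ hgh 1
  -- Only finitely many residues `a` and basis indices `i` occur in `h`, which gives a finite
  -- expansion of `h` even if `k` is infinite over `k^p`.
  let res : (σ →₀ ℕ) → {a : σ →₀ ℕ // ∀ j, a j < p} := fun s =>
    ⟨s.mapRange (· % p) (Nat.zero_mod p), fun j => by simpa using Nat.mod_lt _ hp⟩
  let A := h.support.image res
  let Λ := h.support.biUnion fun s => (r (coeff s h)).support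
  have hdec : h = ∑ a ∈ A, ∑ i ∈ Λ, φ i a h ^ p * monomial a.1 (b i) := by
    ext s
    simp only [coeff_sum]
    have hs : p • s.mapRange (· / p) (Nat.zero_div p) + (res s).1 = s := by
      ext j
      simpa [res] using Nat.div_add_mod (s j) p
    have hterm : ∀ a ∈ A, ∑ i ∈ Λ, coeff s (φ i a h ^ p * monomial a.1 (b i)) =
        if res s = a then ∑ i ∈ Λ, frobenius k p (r (coeff s h) i) * b i else 0 := by
      intro a _
      by_cases hsa : res s = a
      · subst hsa
        rw [if_pos rfl]
        refine Finset.sum_congr rfl fun i _ => ?_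
        rw [coeff_pow_mul_monomial (res s).2, if_pos rfl, hφ, hs, frobenius_def]
      · rw [if_neg hsa]
        refine Finset.sum_eq_zero fun i _ => ?_
        rw [coeff_pow_mul_monomial a.2, if_neg fun H => hsa (Subtype.ext H)]
    rw [Finset.sum_congr rfl hterm, Finset.sum_ite_eq]
    by_cases hs0 : coeff s h = 0
    · simp [hs0]
    · have hmem : s ∈ h.support := mem_support_iff.2 hs0
      rw [if_pos (Finset.mem_image_of_mem _ hmem)]
      conv_lhs => rw [← hb (coeff s h)]
      refine Finsupp.sum_of_support_subset _ ?_ _ (by simp)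
      exact Finset.subset_biUnion_of_mem (fun s => (r (coeff s h)).support) hmem
  rw [hdec]
  refine sum_mem fun a _ => sum_mem fun i _ => Ideal.mul_mem_right _ _ ?_
  exact Ideal.subset_span ⟨_, hcol i a, rfl⟩

theorem bracketPow_mul_le {A : Type*} [CommRing A] (I : Ideal A) (q q' : ℕ) :
    bracketPow I (q * q') ≤ bracketPow (bracketPow I q) q' := by
  rw [bracketPow, Ideal.span_le]
  rintro _ ⟨u, hu, rfl⟩
  exact Ideal.subset_span ⟨u ^ q, Ideal.subset_span ⟨u, hu, rfl⟩, (pow_mul u q q').symm⟩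
end

/-- Main theorem, element form: Let `f` be homogeneous of degree `d` with
`√τ(f^{1−1/p}) = m` and `τ(f^{1−1/p}) ⊆ m`, and let `δ` be the eventual constant value of
`M_e − (n+1)p^e`. Then for every `e ≥ e_0` and every homogeneous `g ∉ m^{[e]}` with
`deg g − (n+1)p^e < δ`, one has `f^{p−1}·g^p ∉ m^{[e+1]}`. -/
theorem frobenius_injective_in_low_degrees {k : Type*} [Field k] {p n : ℕ}
    [Fact p.Prime] [CharP k p]
    (f : MvPolynomial (Fin (n + 1)) k) (d : ℕ) (hf : f.IsHomogeneous d)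
    (hτm : testIdeal p f 1 ≤ mxI k n)
    (hrad : (testIdeal p f 1).radical = mxI k n)
    (δ : ℤ)
    (hδ : ∃ E : ℕ, ∀ e ≥ E, (Me k n p (testIdeal p f 1) e : ℤ) - (n + 1) * p ^ e = δ)
    (e : ℕ) (he : e0 k n p (testIdeal p f 1) ≤ e)
    (g : MvPolynomial (Fin (n + 1)) k) (dg : ℕ) (hg : g.IsHomogeneous dg)
    (hgm : g ∉ bracketPow (mxI k n) (p ^ e))
    (hdeg : (dg : ℤ) - (n + 1) * p ^ e < δ) :
    f ^ (p - 1) * g ^ p ∉ bracketPow (mxI k n) (p ^ (e + 1)) := by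
  intro hmem
  set τ := testIdeal p f 1 with hτ
  have hτg : τ ≤ (bracketPow (mxI k n) (p ^ e)).colon {g} := by
    refine sInf_le ?_
    simp only [Set.mem_ofPred_eq, pow_one]
    exact mem_bracketPow_colon _ _ _ (bracketPow_mul_le _ _ _ (pow_succ p e ▸ hmem))
  obtain ⟨E, hE⟩ := hδ
  -- Any exponent that is at least both `e` and `E` would do; `e + E` is one.
  have hle : p ^ e ≤ p ^ (e + E) := Nat.pow_le_pow_right (Fact.out : p.Prime).pos (by omega)
  have hMe : dg + (n + 1) * (p ^ (e + E) - p ^ e) ∈ MeSet k n p τ (e + E) := by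
    refine ⟨g * monomial (Finsupp.equivFunOnFinite.symm fun _ => p ^ (e + E) - p ^ e) 1,
      ?_, fun H => hgm (mul_mem_bracketPow_mxI.1 H), hg.mul (isHomogeneous_monomial _ ?_)⟩
    · refine Submodule.mem_colon.2 fun t ht => ?_
      have h1 : t * g ∈ bracketPow (mxI k n) (p ^ e) :=
        Submodule.mem_colon_singleton.1 (hτg ht)
      rw [smul_eq_mul, mul_right_comm, mul_comm g]
      exact mul_mem_bracketPow_mxI.2 h1
    · simp [Finsupp.degree_eq_sum]
  have h1 : Me k n p τ (e + E) ≤ dg + (n + 1) * (p ^ (e + E) - p ^ e) := Nat.sInf_le hMe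
  have h2 := hE (e + E) (by omega)
  zify [hle] at h1
  linarith

end
end
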